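/- arXiv:2002.01044 — 2 statements merged into one kernel-verified Lean document; each statement's English description precedes it below -/
import Mathlib

section
/- A multinomial parameter drawn uniformly at random from the simplex induces a uniform distribution over empirical distributions: for every p̂ ∈ Δ_{k,n}, the integral ∫_{Δ_k} P_p(p̂) dσ(p), where σ is the (k−1)-dimensional Lebesgue (surface) measure on Δ_k, equals σ(Δ_k)/|Δ_{k,n}|; in particular this integral has the same value for every p̂ ∈ Δ_{k,n}, and |Δ_{k,n}| = C(n+k−1, k−1). -/
open MeasureTheory Finset
open scoped ENNReal Classical

noncomputable section

/-- The discrete simplex of empirical count vectors from `n` samples over `k` categories. -/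
def discSimplex (k n : ℕ) : Finset (Fin k → ℕ) :=
  (Fintype.piFinset fun _ : Fin k => Finset.range (n + 1)).filter fun c => ∑ i, c i = n

/-- The probability simplex `Δ_k ⊆ ℝ^k`. -/
def probSimplex (k : ℕ) : Set (EuclideanSpace ℝ (Fin k)) :=
  {p | (∀ i, 0 ≤ p i) ∧ ∑ i, p i = 1}

/-- Multinomial probability of observing the empirical count vector `c` under parameter `p`. -/
def multProb (k : ℕ) (p : EuclideanSpace ℝ (Fin k)) (c : Fin k → ℕ) : ℝ :=
  (Nat.multinomial Finset.univ c : ℝ) * ∏ i, p i ^ c i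

/-- The `(k-1)`-dimensional Lebesgue (surface) measure on `Δ_k ⊆ ℝ^k`, realized as the
`(k-1)`-dimensional Hausdorff measure on Euclidean space. -/
def surfMeasure (k : ℕ) : Measure (EuclideanSpace ℝ (Fin k)) :=
  Measure.hausdorffMeasure ((k : ℝ) - 1)

lemma aux_beta (t : ℝ) (b : ℕ) : ∀ a : ℕ,
    ∫ x in (0:ℝ)..t, (x ^ a / a.factorial) * ((t - x) ^ b / b.factorial)
      = t ^ (a + b + 1) / (a + b + 1).factorial := by
  induction b with
  | zero =>
    intro a
    have h : (a.factorial : ℝ) ≠ 0 := by positivity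
    have h2 : (a : ℝ) + 1 ≠ 0 := by positivity
    simp [integral_pow, Nat.factorial_succ]
    field_simp
  | succ b ih =>
    intro a
    have hd : ∀ x ∈ Set.uIcc 0 t, HasDerivAt
        (fun x : ℝ => (x ^ (a+1) / (a+1).factorial) * ((t - x) ^ (b+1) / (b+1).factorial))
        ((x ^ a / a.factorial) * ((t - x) ^ (b+1) / (b+1).factorial)
          - (x ^ (a+1) / (a+1).factorial) * ((t - x) ^ b / b.factorial)) x := by
      intro x _
      have h1 := ((hasDerivAt_id x).pow (a+1)).div_const ((a+1).factorial : ℝ)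
      have h2 := (((hasDerivAt_id x).const_sub t).pow (b+1)).div_const ((b+1).factorial : ℝ)
      refine (h1.mul h2).congr_deriv ?_
      have ha : (a.factorial : ℝ) ≠ 0 := by positivity
      have hb : (b.factorial : ℝ) ≠ 0 := by positivity
      have h3 : (a : ℝ) + 1 ≠ 0 := by positivity
      have h4 : (b : ℝ) + 1 ≠ 0 := by positivity
      simp [Nat.factorial_succ]
      field_simp
      ring
    have h := intervalIntegral.integral_eq_sub_of_hasDerivAt hd
      (Continuous.intervalIntegrable (by fun_prop) _ _)
    rw [intervalIntegral.integral_sub (Continuous.intervalIntegrable (by fun_prop) _ _)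
      (Continuous.intervalIntegrable (by fun_prop) _ _), ih (a+1)] at h
    simp at h
    have e : a + (b + 1) + 1 = a + 1 + b + 1 := by ring
    rw [e]
    linarith

/-- truncated normalized monomial -/
def gE (c : ℕ) (s : ℝ) : ℝ≥0∞ :=
  Set.indicator (Set.Ici 0) (fun s => ENNReal.ofReal (s ^ c / c.factorial)) s

@[fun_prop]
lemma gE_meas (c : ℕ) : Measurable (gE c) := by
  unfold gE
  exact Measurable.indicator (by fun_prop) measurableSet_Ici

lemma gE_pos (c : ℕ) {s : ℝ} (hs : 0 ≤ s) : gE c s = ENNReal.ofReal (s ^ c / c.factorial) := by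
  simp [gE, hs]

lemma gE_neg (c : ℕ) {s : ℝ} (hs : s < 0) : gE c s = 0 := by
  simp [gE, hs]

lemma gE_conv (a b : ℕ) (t : ℝ) :
    ∫⁻ x, gE a x * gE b (t - x) = gE (a + b + 1) t := by
  rcases lt_or_ge t 0 with ht | ht
  · rw [gE_neg _ ht, lintegral_eq_zero_iff (by fun_prop)]
    filter_upwards with x
    rcases lt_or_ge x 0 with hx | hx
    · simp [gE_neg _ hx]
    · simp [gE_neg b (show t - x < 0 by linarith)]
  · have : ∀ x, gE a x * gE b (t - x) = Set.indicator (Set.Icc 0 t)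
        (fun x => ENNReal.ofReal ((x ^ a / a.factorial) * ((t - x) ^ b / b.factorial))) x := by
      intro x
      by_cases hx : x ∈ Set.Icc 0 t
      · rw [Set.indicator_of_mem hx, gE_pos _ hx.1, gE_pos _ (sub_nonneg.2 hx.2),
          ENNReal.ofReal_mul]
        have := hx.1
        positivity
      · rw [Set.indicator_of_notMem hx]
        rcases lt_or_ge x 0 with h | h
        · simp [gE_neg _ h]
        · have : t - x < 0 := by
            by_contra h'
            exact hx ⟨h, by linarith⟩
          simp [gE_neg b this]
    simp_rw [this]
    rw [lintegral_indicator measurableSet_Icc, ← ofReal_integral_eq_lintegral_ofReal,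
      integral_Icc_eq_integral_Ioc, ← intervalIntegral.integral_of_le ht, aux_beta, gE_pos _ ht]
    · exact (Continuous.continuousOn (by fun_prop)).integrableOn_compact isCompact_Icc
    · refine (ae_restrict_iff' measurableSet_Icc).2 (Filter.Eventually.of_forall ?_)
      intro x hx
      have := hx.1
      have := sub_nonneg.2 hx.2
      simp only [Pi.zero_apply]
      positivity

lemma gE_multi (m : ℕ) : ∀ (c : Fin m → ℕ) (d : ℕ) (t : ℝ),
    ∫⁻ x : Fin m → ℝ, (∏ i, gE (c i) (x i)) * gE d (t - ∑ i, x i) = gE (∑ i, c i + d + m) t := by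
  induction m with
  | zero => intro c d t; simp [lintegral_unique, volume_pi]
  | succ m ih =>
    intro c d t
    rw [← ((volume_preserving_piFinSuccAbove (fun _ => ℝ) (0 : Fin (m+1))).symm _).lintegral_comp
      (by fun_prop)]
    rw [Measure.volume_eq_prod, lintegral_prod _ (by fun_prop)]
    simp only [MeasurableEquiv.piFinSuccAbove_symm_apply, Fin.insertNthEquiv, Equiv.coe_fn_mk, Fin.insertNth_zero', Fin.prod_univ_succ,
      Fin.sum_univ_succ, Fin.cons_zero, Fin.cons_succ, mul_assoc]
    have : ∀ x : ℝ, ∫⁻ y : Fin m → ℝ, gE (c 0) x * ((∏ i : Fin m, gE (c i.succ) (y i)) *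
        gE d (t - (x + ∑ i, y i))) = gE (c 0) x * gE (∑ i : Fin m, c i.succ + d + m) (t - x) := by
      intro x
      rw [lintegral_const_mul _ (by fun_prop), ← ih]
      simp_rw [sub_sub]
    have e : c 0 + ∑ i : Fin m, c i.succ + d + (m+1) = c 0 + (∑ i : Fin m, c i.succ + d + m) + 1 := by ring
    rw [e, ← gE_conv]
    refine lintegral_congr this

def phi (m : ℕ) (x : Fin m → ℝ) : EuclideanSpace ℝ (Fin (m+1)) :=
  WithLp.toLp 2 (Fin.cons (1 - ∑ i, x i) x : Fin (m+1) → ℝ)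

lemma phi_zero (m : ℕ) (x : Fin m → ℝ) : phi m x 0 = 1 - ∑ i, x i := rfl
lemma phi_succ (m : ℕ) (x : Fin m → ℝ) (i : Fin m) : phi m x i.succ = x i := rfl

def phiL (m : ℕ) : (Fin m → ℝ) →ₗ[ℝ] EuclideanSpace ℝ (Fin (m+1)) where
  toFun x := WithLp.toLp 2 (Fin.cons (- ∑ i, x i) x : Fin (m+1) → ℝ)
  map_add' x y := by
    ext i
    refine Fin.cases ?_ (fun i => ?_) i
    · simp [Finset.sum_add_distrib]; ring
    · simp
  map_smul' r x := by
    ext i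
    refine Fin.cases ?_ (fun i => ?_) i
    · simp [Finset.mul_sum]
    · simp

lemma phi_add (m : ℕ) (x y : Fin m → ℝ) : phi m (x + y) = phiL m x + phi m y := by
  ext i
  refine Fin.cases ?_ (fun i => ?_) i
  · simp [phi, phiL, Finset.sum_add_distrib]; ring
  · simp [phi, phiL]

lemma phi_inj (m : ℕ) : Function.Injective (phi m) := by
  intro x y h
  ext i
  rw [← phi_succ m x, h, phi_succ]

lemma phi_lip (m : ℕ) : ∃ K, LipschitzWith K (phi m) := by
  obtain ⟨K, hK⟩ : ∃ K, LipschitzWith K (phiL m) :=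
    ⟨_, (LinearMap.toContinuousLinearMap (phiL m)).lipschitz⟩
  refine ⟨K, fun x y => ?_⟩
  have hx := phi_add m x 0
  have hy := phi_add m y 0
  simp only [add_zero] at hx hy
  rw [hx, hy, edist_add_right]
  exact hK x y

lemma phi_emb (m : ℕ) : MeasurableEmbedding (phi m) := by
  obtain ⟨K, hK⟩ := phi_lip m
  exact hK.continuous.measurableEmbedding (phi_inj m)

lemma comap_eq (m : ℕ) : ∃ κ : NNReal, (surfMeasure (m+1)).comap (phi m) = κ • volume := by
  have hs : surfMeasure (m+1) = Measure.hausdorffMeasure (m : ℝ) := by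
    simp [surfMeasure]
  rw [hs]
  set ν := (Measure.hausdorffMeasure (m:ℝ) : Measure (EuclideanSpace ℝ (Fin (m+1)))).comap (phi m)
  have hν : ∀ s, MeasurableSet s → ν s = Measure.hausdorffMeasure (m:ℝ) (phi m '' s) := fun s hs =>
    (phi_emb m).comap_apply _ s
  obtain ⟨K, hK⟩ := phi_lip m
  have hfin : IsFiniteMeasureOnCompacts ν := by
    refine ⟨fun s hs => ?_⟩
    rw [hν s hs.measurableSet]
    refine (hK.hausdorffMeasure_image_le (Nat.cast_nonneg m) s).trans_lt ?_
    have := hausdorffMeasure_pi_real (ι := Fin m)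
    simp only [Fintype.card_fin] at this
    rw [this]
    exact ENNReal.mul_lt_top (ENNReal.rpow_lt_top_of_nonneg (Nat.cast_nonneg m) ENNReal.coe_ne_top)
      hs.measure_lt_top
  have hinv : ν.IsAddLeftInvariant := by
    refine ⟨fun g => ?_⟩
    ext s hs
    rw [Measure.map_apply (by fun_prop) hs, hν s hs, hν _ (hs.preimage (by fun_prop))]
    have : phi m '' ((fun x => g + x) ⁻¹' s) = (fun y => phiL m g + y) ⁻¹' (phi m '' s) := by
      ext y
      constructor
      · rintro ⟨x, hx, rfl⟩
        exact ⟨g + x, hx, phi_add m g x⟩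
      · rintro ⟨x, hx, hxy⟩
        refine ⟨-g + x, by simpa using hx, ?_⟩
        rw [phi_add, hxy]
        simp
    rw [this, measure_preimage_add]
  exact ⟨_, Measure.isAddLeftInvariant_eq_smul ν volume⟩

lemma simplex_meas (k : ℕ) : MeasurableSet (probSimplex k) := by
  have : probSimplex k = (⋂ i, {p | 0 ≤ p i}) ∩ {p | ∑ i, p i = 1} := by
    ext; simp [probSimplex]
  rw [this]
  exact (MeasurableSet.iInter fun i => measurableSet_le (by fun_prop) (by fun_prop)).inter
    (measurableSet_eq_fun (by fun_prop) (by fun_prop))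

lemma simplex_range (m : ℕ) : probSimplex (m+1) ⊆ Set.range (phi m) := by
  intro p hp
  refine ⟨fun i => p i.succ, ?_⟩
  have := hp.2
  rw [Fin.sum_univ_succ] at this
  ext i
  refine Fin.cases ?_ (fun i => ?_) i
  · rw [phi_zero]; linarith
  · rw [phi_succ]

lemma main_lint (m : ℕ) {κ : NNReal} (hκ : (surfMeasure (m+1)).comap (phi m) = κ • volume)
    (c : Fin (m+1) → ℕ) :
    ∫⁻ p in probSimplex (m+1), ENNReal.ofReal (∏ i, (p i ^ c i / (c i).factorial))
      ∂(surfMeasure (m+1)) = κ * ENNReal.ofReal (1 / (∑ i, c i + m).factorial) := by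
  have h1 : (surfMeasure (m+1)).restrict (probSimplex (m+1)) =
      (((surfMeasure (m+1)).comap (phi m)).map (phi m)).restrict (probSimplex (m+1)) := by
    rw [(phi_emb m).map_comap, Measure.restrict_restrict (simplex_meas _),
      Set.inter_eq_left.2 (simplex_range m)]
  rw [h1, ← lintegral_indicator (simplex_meas _), (phi_emb m).lintegral_map, hκ, lintegral_smul_measure]
  have h2 : ∀ x, (probSimplex (m+1)).indicator (fun p : EuclideanSpace ℝ (Fin (m+1)) =>
      ENNReal.ofReal (∏ i, (p i ^ c i / (c i).factorial))) (phi m x)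
      = (∏ i : Fin m, gE (c i.succ) (x i)) * gE (c 0) (1 - ∑ i, x i) := by
    intro x
    by_cases hx : phi m x ∈ probSimplex (m+1)
    · rw [Set.indicator_of_mem hx]
      have h0 := hx.1 0
      rw [phi_zero] at h0
      have hs : ∀ i, 0 ≤ x i := fun i => hx.1 i.succ
      rw [Fin.prod_univ_succ, gE_pos _ h0, ENNReal.ofReal_mul (by rw [phi_zero]; positivity),
        ENNReal.ofReal_prod_of_nonneg, mul_comm]
      · congr 1
        refine Finset.prod_congr rfl fun i _ => ?_
        rw [gE_pos _ (hs i), phi_succ]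
      · intro i _
        rw [phi_succ]
        have := hs i
        positivity
    · rw [Set.indicator_of_notMem hx]
      symm
      by_cases hs : ∀ i, 0 ≤ x i
      · rcases lt_or_ge (1 - ∑ i, x i) 0 with h | h
        · rw [gE_neg _ h, mul_zero]
        · refine absurd ⟨fun i => ?_, ?_⟩ hx
          · refine Fin.cases ?_ (fun i => ?_) i
            · rwa [phi_zero]
            · rw [phi_succ]; exact hs i
          · rw [Fin.sum_univ_succ, phi_zero]
            simp_rw [phi_succ]
            ring
      · push Not at hs
        obtain ⟨i, hi⟩ := hs
        rw [Finset.prod_eq_zero (Finset.mem_univ i) (gE_neg _ hi), zero_mul]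
  simp_rw [h2]
  rw [gE_multi, gE_pos _ zero_le_one, Fin.sum_univ_succ]
  rw [add_comm (∑ i : Fin m, c i.succ) (c 0), one_pow]
  rfl

lemma disc_card (k n : ℕ) (hk : 1 ≤ k) : (discSimplex k n).card = (n + k - 1).choose (k - 1) := by
  have : discSimplex k n = Finset.piAntidiag Finset.univ n := by
    ext f
    simp only [discSimplex, mem_filter, Fintype.mem_piFinset, mem_range, mem_piAntidiag]
    constructor
    · rintro ⟨_, h⟩; exact ⟨h, by simp⟩
    · rintro ⟨h, _⟩
      refine ⟨fun i => ?_, h⟩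
      have := Finset.single_le_sum (f := f) (fun _ _ => Nat.zero_le _) (Finset.mem_univ i)
      rw [h] at this
      omega
  rw [this, ← Finset.map_sym_eq_piAntidiag, Finset.card_map]
  have h2 : (Finset.univ : Finset (Fin k)).sym n = Finset.univ := by simp
  rw [h2, Finset.card_univ, Sym.card_sym_eq_choose, Fintype.card_fin, Nat.add_comm k n]
  rw [← Nat.choose_symm (by omega)]
  congr 1
  omega

lemma multProb_eq (k : ℕ) (p : EuclideanSpace ℝ (Fin k)) (c : Fin k → ℕ) :
    multProb k p c = ((∑ i, c i).factorial : ℝ) * ∏ i, (p i ^ c i / (c i).factorial) := by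
  have h := Nat.multinomial_spec Finset.univ c
  have h' : (∏ i, ((c i).factorial : ℝ)) * (Nat.multinomial Finset.univ c : ℝ)
      = ((∑ i, c i).factorial : ℝ) := by exact_mod_cast h
  have h0 : (∏ i, ((c i).factorial : ℝ)) ≠ 0 := by positivity
  rw [multProb, Finset.prod_div_distrib, ← h']
  field_simp

/-- A uniformly random multinomial parameter induces the uniform distribution on empirical
distributions: for every `p̂ ∈ Δ_{k,n}`, `∫_{Δ_k} P_p(p̂) dσ(p) = σ(Δ_k)/|Δ_{k,n}|`, and
`|Δ_{k,n}| = C(n+k-1, k-1)`. -/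
theorem uniform_prior_induces_uniform (k n : ℕ) (hk : 2 ≤ k) (hn : 1 ≤ n) :
    (∀ c ∈ discSimplex k n,
      ∫ p in probSimplex k, multProb k p c ∂(surfMeasure k)
        = (surfMeasure k (probSimplex k)).toReal / ((discSimplex k n).card : ℝ))
    ∧ (discSimplex k n).card = (n + k - 1).choose (k - 1) := by
  refine ⟨fun c hc => ?_, disc_card k n (by omega)⟩
  rw [disc_card k n (by omega)]
  obtain ⟨m, rfl⟩ : ∃ m, k = m + 1 := ⟨k - 1, by omega⟩
  obtain ⟨κ, hκ⟩ := comap_eq m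
  have hsum : ∑ i, c i = n := (Finset.mem_filter.1 hc).2
  have hvol := main_lint m hκ 0
  simp only [Pi.zero_apply, pow_zero, Nat.factorial_zero, Nat.cast_one, div_one,
    Finset.prod_const_one, ENNReal.ofReal_one, setLIntegral_one, Finset.sum_const_zero,
    zero_add] at hvol
  have hint : ∫ p in probSimplex (m+1), ∏ i, (p i ^ c i / (c i).factorial) ∂(surfMeasure (m+1))
      = κ * (1 / (n + m).factorial) := by
    rw [integral_eq_lintegral_of_nonneg_ae, main_lint m hκ c, hsum, ENNReal.toReal_mul,
      ENNReal.toReal_ofReal (by positivity)]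
    · rfl
    · refine (ae_restrict_iff' (simplex_meas _)).2 (Filter.Eventually.of_forall fun p hp => ?_)
      exact Finset.prod_nonneg fun i _ => div_nonneg (pow_nonneg (hp.1 i) _) (by positivity)
    · exact Measurable.aestronglyMeasurable (by fun_prop)
  simp_rw [multProb_eq]
  rw [integral_const_mul, hint, hvol, ENNReal.toReal_mul, ENNReal.toReal_ofReal (by positivity),
    hsum]
  have e : n + (m + 1) - 1 = n + m := by omega
  rw [e, Nat.add_sub_cancel, ENNReal.coe_toReal]
  have hch := Nat.add_choose_mul_factorial_mul_factorial n m
  have hch' : ((n + m).choose m : ℝ) * n.factorial * m.factorial = (n + m).factorial := by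
    exact_mod_cast hch
  have hpos : ((n + m).choose m : ℝ) ≠ 0 := by
    exact_mod_cast (Nat.choose_pos (Nat.le_add_left m n)).ne'
  rw [← hch']
  field_simp
end
end

section
/- Proposition (optimality under a uniform prior): let 0 < δ < 1, let p be drawn uniformly at random from Δ_k (according to normalized (k−1)-dimensional Lebesgue surface measure), and let p̂ be the empirical distribution of n i.i.d. draws from p. Let C* be a minimal-volume confidence region and C any confidence region at level 1−δ, with all sets C*(p̂) and C(p̂) μ-measurable. Then E[μ(C*(p̂))] ≤ E[μ(C(p̂))], where the expectation is over the random p and p̂. -/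
open MeasureTheory Finset
open scoped ENNReal Classical

noncomputable section

/-- Probability of a set of empirical count vectors under parameter `p`. -/
def Pmass (k : ℕ) (p : EuclideanSpace ℝ (Fin k)) (S : Finset (Fin k → ℕ)) : ℝ :=
  ∑ c ∈ S, multProb k p c

/-- Expected volume of the region `C(p̂)` when the parameter `p` is drawn uniformly at random
from `Δ_k` (normalized surface measure) and `p̂` is the empirical distribution of `n` i.i.d.
samples from `p`. -/
def expectedVolume (k n : ℕ) (C : (Fin k → ℕ) → Set (EuclideanSpace ℝ (Fin k))) : ℝ≥0∞ :=
  (∫⁻ p in probSimplex k,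
      ∑ c ∈ discSimplex k n, ENNReal.ofReal (multProb k p c) * surfMeasure k (C c)
    ∂(surfMeasure k)) / surfMeasure k (probSimplex k)

/-- Gamma-type density. -/
def gdens (c : ℕ) (t : ℝ) : ℝ := if 0 ≤ t then t ^ c * Real.exp (-t) else 0

lemma gdens_nonneg (c : ℕ) (t : ℝ) : 0 ≤ gdens c t := by
  unfold gdens
  split_ifs with h
  · positivity
  · exact le_rfl

lemma gdens_measurable (c : ℕ) : Measurable (gdens c) := by
  unfold gdens
  refine Measurable.ite measurableSet_Ici (by fun_prop) (by fun_prop)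

lemma gdens_eq_indicator (c : ℕ) :
    gdens c = (Set.Ici (0 : ℝ)).indicator (fun t => t ^ c * Real.exp (-t)) := by
  funext t
  simp [gdens, Set.indicator, Set.mem_Ici]

lemma gdens_integrable (c : ℕ) : Integrable (gdens c) := by
  rw [gdens_eq_indicator, integrable_indicator_iff measurableSet_Ici,
    integrableOn_Ici_iff_integrableOn_Ioi]
  have h := Real.GammaIntegral_convergent (s := (c : ℝ) + 1) (by positivity)
  refine h.congr_fun (fun x _ => ?_) measurableSet_Ioi
  simp [mul_comm]

lemma gdens_integral (c : ℕ) : ∫ t, gdens c t = (c.factorial : ℝ) := by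
  rw [gdens_eq_indicator, integral_indicator measurableSet_Ici, integral_Ici_eq_integral_Ioi,
    ← Real.Gamma_nat_eq_factorial, Real.Gamma_eq_integral (by positivity)]
  refine setIntegral_congr_fun measurableSet_Ioi (fun x _ => ?_)
  simp [mul_comm]

lemma gdens_lintegral (c : ℕ) :
    ∫⁻ t, ENNReal.ofReal (gdens c t) = ENNReal.ofReal (c.factorial : ℝ) := by
  rw [← ofReal_integral_eq_lintegral_ofReal (gdens_integrable c)
    (ae_of_all _ (gdens_nonneg c)), gdens_integral]

lemma gdens_prod_lintegral {k : ℕ} (c : Fin k → ℕ) :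
    ∫⁻ x : Fin k → ℝ, ENNReal.ofReal (∏ i, gdens (c i) (x i))
      = ENNReal.ofReal (∏ i, ((c i).factorial : ℝ)) := by
  rw [volume_pi, ← ofReal_integral_eq_lintegral_ofReal
    (Integrable.fintype_prod (fun i => gdens_integrable (c i)))
    (ae_of_all _ (fun x => Finset.prod_nonneg (fun i _ => gdens_nonneg _ _)))]
  congr 1
  rw [integral_fintype_prod_eq_prod]
  simp [gdens_integral]

lemma gdens_prod_eq {k : ℕ} (c : Fin k → ℕ) (x : Fin k → ℝ) (hx : ∀ i, 0 ≤ x i) :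
    ∏ i, gdens (c i) (x i) = (∏ i, x i ^ c i) * Real.exp (-∑ i, x i) := by
  simp only [gdens, hx, if_true, Finset.prod_mul_distrib, ← Finset.sum_neg_distrib, Real.exp_sum]

lemma gdens_prod_zero {k : ℕ} (c : Fin k → ℕ) (x : Fin k → ℝ) (hx : ¬ ∀ i, 0 ≤ x i) :
    ∏ i, gdens (c i) (x i) = 0 := by
  push Not at hx
  obtain ⟨i, hi⟩ := hx
  exact Finset.prod_eq_zero (Finset.mem_univ i) (by simp [gdens, hi])

/-- The coordinate sum. -/
def sumL (k : ℕ) : EuclideanSpace ℝ (Fin k) →ₗ[ℝ] ℝ where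
  toFun x := ∑ i, x i
  map_add' x y := by simp [Finset.sum_add_distrib]
  map_smul' r x := by simp [Finset.mul_sum]

lemma sumL_apply (k : ℕ) (x : EuclideanSpace ℝ (Fin k)) : sumL k x = ∑ i, x i := rfl

/-- A reference point with coordinate sum one. -/
def uvec (k : ℕ) (hk : 2 ≤ k) : EuclideanSpace ℝ (Fin k) :=
  EuclideanSpace.single ⟨0, by omega⟩ 1

lemma sumL_uvec (k : ℕ) (hk : 2 ≤ k) : sumL k (uvec k hk) = 1 := by
  simp [sumL_apply, uvec, Finset.sum_ite_eq]

lemma finrank_ker_sumL (k : ℕ) (hk : 2 ≤ k) :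
    Module.finrank ℝ (LinearMap.ker (sumL k)) + 1 = k := by
  have h := (sumL k).finrank_range_add_finrank_ker
  have hr : LinearMap.range (sumL k) = ⊤ := by
    rw [LinearMap.range_eq_top]
    intro r
    exact ⟨r • uvec k hk, by simp [sumL_uvec]⟩
  rw [hr, finrank_top, Module.finrank_self, finrank_euclideanSpace_fin] at h
  omega

/-- Splitting space into the sum-zero hyperplane and a line. -/
def splitEquiv (k : ℕ) (hk : 2 ≤ k) :
    (LinearMap.ker (sumL k) × ℝ) ≃ₗ[ℝ] (Fin k → ℝ) where
  toFun z := WithLp.ofLp ((z.1 : EuclideanSpace ℝ (Fin k)) + z.2 • uvec k hk)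
  map_add' x y := by
    ext i; simp [add_mul]; ring
  map_smul' r x := by
    ext i; simp; ring
  invFun x := (⟨WithLp.toLp 2 x - sumL k (WithLp.toLp 2 x) • uvec k hk, by
    simp [LinearMap.mem_ker, sumL_uvec]⟩, sumL k (WithLp.toLp 2 x))
  left_inv z := by
    obtain ⟨⟨v, hv⟩, s⟩ := z
    rw [LinearMap.mem_ker] at hv
    ext <;> simp [hv, sumL_uvec]
  right_inv x := by
    ext i; simp

/-- Monomials on the nonnegative orthant. -/
def monoE (k : ℕ) (c : Fin k → ℕ) (p : EuclideanSpace ℝ (Fin k)) : ℝ≥0∞ :=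
  if ∀ i, 0 ≤ p i then ENNReal.ofReal (∏ i, p i ^ c i) else 0

lemma monoE_measurable (k : ℕ) (c : Fin k → ℕ) : Measurable (monoE k c) := by
  unfold monoE
  refine Measurable.ite ?_ (by fun_prop) (by fun_prop)
  rw [Set.ofPred_forall]
  exact MeasurableSet.iInter fun i => measurableSet_le (by fun_prop) (by fun_prop)

lemma hyper_integral (k : ℕ) (hk : 2 ≤ k) (c : Fin k → ℕ) :
    ∫⁻ w : LinearMap.ker (sumL k), monoE k c ((w : EuclideanSpace ℝ (Fin k)) + uvec k hk)
        ∂(Measure.hausdorffMeasure (Module.finrank ℝ (LinearMap.ker (sumL k)) : ℝ))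
      = ∫⁻ p in probSimplex k, ENNReal.ofReal (∏ i, p i ^ c i) ∂(surfMeasure k) := by
  have hd : ((Module.finrank ℝ (LinearMap.ker (sumL k)) : ℕ) : ℝ) = (k : ℝ) - 1 := by
    have := finrank_ker_sumL k hk
    rw [eq_sub_iff_add_eq]
    exact_mod_cast this
  have hiso : Isometry (fun w : LinearMap.ker (sumL k) =>
      (w : EuclideanSpace ℝ (Fin k)) + uvec k hk) := by
    refine Isometry.of_dist_eq fun x y => ?_
    simp [Subtype.dist_eq]
  have hmap := hiso.map_hausdorffMeasure
    (d := (Module.finrank ℝ (LinearMap.ker (sumL k)) : ℝ)) (Or.inl (by positivity))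
  rw [← lintegral_map (f := monoE k c) (monoE_measurable k c) hiso.continuous.measurable, hmap]
  have hrange : Set.range (fun w : LinearMap.ker (sumL k) =>
      (w : EuclideanSpace ℝ (Fin k)) + uvec k hk) = {p | sumL k p = 1} := by
    ext p
    constructor
    · rintro ⟨w, rfl⟩
      have := w.2
      rw [LinearMap.mem_ker] at this
      simp [this, sumL_uvec]
    · intro hp
      have hp' : sumL k p = 1 := hp
      exact ⟨⟨p - uvec k hk, by simp [LinearMap.mem_ker, hp', sumL_uvec]⟩, by simp⟩
  rw [hrange, hd]
  change ∫⁻ p in {p | sumL k p = 1}, monoE k c p ∂(surfMeasure k) = _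
  have hm1 : MeasurableSet {p : EuclideanSpace ℝ (Fin k) | sumL k p = 1} := by
    refine measurableSet_eq_fun ?_ measurable_const
    change Measurable fun p : EuclideanSpace ℝ (Fin k) => ∑ i, p i
    fun_prop
  have hm2 : MeasurableSet {p : EuclideanSpace ℝ (Fin k) | ∀ i, 0 ≤ p i} := by
    rw [Set.ofPred_forall]
    exact MeasurableSet.iInter fun i => measurableSet_le (by fun_prop) (by fun_prop)
  have hm3 : MeasurableSet (probSimplex k) := hm2.inter hm1
  rw [← lintegral_indicator hm1, ← lintegral_indicator hm3]
  congr 1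
  funext p
  by_cases h1 : ∀ i, 0 ≤ p i <;> by_cases h2 : ∑ i, p i = 1 <;>
    simp [Set.indicator, monoE, probSimplex, sumL_apply, h1, h2]

lemma scale_eq (k n : ℕ) (hk : 2 ≤ k) (c : Fin k → ℕ) (hc : ∑ i, c i = n) (s : ℝ) (hs : 0 < s)
    (w : LinearMap.ker (sumL k)) :
    ENNReal.ofReal (∏ i, gdens (c i)
        ((((s • w : LinearMap.ker (sumL k)) : EuclideanSpace ℝ (Fin k)) + s • uvec k hk) i))
      = ENNReal.ofReal (s ^ n * Real.exp (-s)) *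
        monoE k c ((w : EuclideanSpace ℝ (Fin k)) + uvec k hk) := by
  have he : ((s • w : LinearMap.ker (sumL k)) : EuclideanSpace ℝ (Fin k)) + s • uvec k hk
      = s • ((w : EuclideanSpace ℝ (Fin k)) + uvec k hk) := by simp
  rw [he]
  have hsum : ∑ i, ((w : EuclideanSpace ℝ (Fin k)) + uvec k hk) i = 1 := by
    rw [← sumL_apply, map_add, sumL_uvec, LinearMap.mem_ker.1 w.2, zero_add]
  set q := (w : EuclideanSpace ℝ (Fin k)) + uvec k hk with hq
  unfold monoE
  by_cases h : ∀ i, 0 ≤ q i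
  · rw [if_pos h, gdens_prod_eq c (fun i => (s • q) i)
      (fun i => by simpa using mul_nonneg hs.le (h i)), ← ENNReal.ofReal_mul (by positivity)]
    congr 1
    simp only [PiLp.smul_apply, smul_eq_mul, mul_pow, Finset.prod_mul_distrib,
      ← Finset.mul_sum, hsum, Finset.prod_pow_eq_pow_sum, hc]
    ring
  · rw [if_neg h, gdens_prod_zero c (fun i => (s • q) i), ENNReal.ofReal_zero, mul_zero]
    intro h'
    apply h
    intro i
    have := h' i
    simp only [PiLp.smul_apply, smul_eq_mul] at this
    exact nonneg_of_mul_nonneg_right this hs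

lemma fiber_integral (k n : ℕ) (hk : 2 ≤ k) (c : Fin k → ℕ) (hc : ∑ i, c i = n)
    (μ : Measure (LinearMap.ker (sumL k))) [μ.IsAddHaarMeasure] (s : ℝ) (hs : s ≠ 0) :
    ∫⁻ v : LinearMap.ker (sumL k), ENNReal.ofReal (∏ i, gdens (c i)
        (((v : EuclideanSpace ℝ (Fin k)) + s • uvec k hk) i)) ∂μ
      = ENNReal.ofReal (gdens (Module.finrank ℝ (LinearMap.ker (sumL k)) + n) s) *
        ∫⁻ w : LinearMap.ker (sumL k), monoE k c ((w : EuclideanSpace ℝ (Fin k)) + uvec k hk) ∂μ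
      := by
  rcases lt_or_gt_of_ne hs with hs | hs
  · have h0 : gdens (Module.finrank ℝ (LinearMap.ker (sumL k)) + n) s = 0 := by
      simp [gdens, hs]
    rw [h0, ENNReal.ofReal_zero, zero_mul]
    rw [lintegral_eq_zero_of_ae_eq_zero]
    refine ae_of_all _ fun v => ?_
    simp only [Pi.zero_apply]
    rw [gdens_prod_zero c (fun i => ((v : EuclideanSpace ℝ (Fin k)) + s • uvec k hk) i),
      ENNReal.ofReal_zero]
    intro h
    have hsum : ∑ i, ((v : EuclideanSpace ℝ (Fin k)) + s • uvec k hk) i = s := by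
      rw [← sumL_apply, map_add, map_smul, sumL_uvec, LinearMap.mem_ker.1 v.2]; simp
    have := Finset.sum_nonneg (fun i (_ : i ∈ Finset.univ) => h i)
    linarith
  · have hmeas : Measurable (fun v : LinearMap.ker (sumL k) => ENNReal.ofReal (∏ i, gdens (c i)
        (((v : EuclideanSpace ℝ (Fin k)) + s • uvec k hk) i))) := by
      refine ENNReal.measurable_ofReal.comp (Finset.measurable_prod _ fun i _ => ?_)
      refine (gdens_measurable _).comp ?_
      fun_prop
    have hmap := Measure.map_addHaar_smul μ (r := s) hs.ne'
    have h1 := lintegral_map (μ := μ) hmeas (measurable_const_smul s)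
    rw [hmap, lintegral_smul_measure] at h1
    simp_rw [scale_eq k n hk c hc s hs] at h1
    have hm : Measurable fun w : LinearMap.ker (sumL k) =>
        monoE k c ((w : EuclideanSpace ℝ (Fin k)) + uvec k hk) :=
      (monoE_measurable k c).comp (by fun_prop)
    rw [lintegral_const_mul _ hm] at h1
    set m := Module.finrank ℝ (LinearMap.ker (sumL k))
    have hsm : 0 < s ^ m := by positivity
    have hinv : ENNReal.ofReal (s ^ m) * ENNReal.ofReal |(s ^ m)⁻¹| = 1 := by
      rw [abs_of_pos (by positivity), ← ENNReal.ofReal_mul hsm.le, mul_inv_cancel₀ hsm.ne',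
        ENNReal.ofReal_one]
    have h2 := congrArg (fun z => ENNReal.ofReal (s ^ m) * z) h1
    simp only [smul_eq_mul, ← mul_assoc] at h2
    rw [hinv, one_mul, ← ENNReal.ofReal_mul hsm.le] at h2
    rw [h2]
    congr 2
    simp only [gdens, hs.le, if_true]
    ring

lemma dirichlet (k n : ℕ) (hk : 2 ≤ k) : ∃ K : ℝ≥0∞, ∀ c ∈ discSimplex k n,
    ∫⁻ p in probSimplex k, ENNReal.ofReal (multProb k p c) ∂(surfMeasure k) = K := by
  set m := Module.finrank ℝ (LinearMap.ker (sumL k)) with hm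
  set μ : Measure (LinearMap.ker (sumL k)) := Measure.hausdorffMeasure (m : ℝ) with hμ
  haveI : μ.IsAddHaarMeasure := isAddHaarMeasure_hausdorffMeasure
  set L := (splitEquiv k hk).toContinuousLinearEquiv with hL
  haveI : (Measure.map L (μ.prod volume)).IsAddHaarMeasure := L.isAddHaarMeasure_map _
  obtain ⟨κ, hκ⟩ : ∃ κ : ℝ≥0∞, Measure.map L (μ.prod volume)
      = κ • (volume : Measure (Fin k → ℝ)) :=
    ⟨_, Measure.isAddLeftInvariant_eq_smul (Measure.map L (μ.prod volume)) volume⟩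
  refine ⟨κ * ENNReal.ofReal (n.factorial : ℝ) / ENNReal.ofReal ((m + n).factorial : ℝ), ?_⟩
  intro c hc
  have hcn : ∑ i, c i = n := by
    simp only [discSimplex, Finset.mem_filter] at hc
    exact hc.2
  have hmeas : Measurable (fun x : Fin k → ℝ => ENNReal.ofReal (∏ i, gdens (c i) (x i))) := by
    refine ENNReal.measurable_ofReal.comp (Finset.measurable_prod _ fun i _ => ?_)
    exact (gdens_measurable _).comp (measurable_pi_apply i)
  have h1 := lintegral_map (μ := μ.prod volume) hmeas L.continuous.measurable
  rw [hκ, lintegral_smul_measure, gdens_prod_lintegral, lintegral_prod_symm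
    (fun a => ENNReal.ofReal (∏ i, gdens (c i) (L a i)))
    (hmeas.comp L.continuous.measurable).aemeasurable] at h1
  have h2 : ∀ᵐ s : ℝ, (∫⁻ v : LinearMap.ker (sumL k),
      ENNReal.ofReal (∏ i, gdens (c i) (L (v, s) i)) ∂μ)
      = ENNReal.ofReal (gdens (m + n) s) *
        ∫⁻ w : LinearMap.ker (sumL k), monoE k c ((w : EuclideanSpace ℝ (Fin k)) + uvec k hk) ∂μ
      := by
    filter_upwards [Measure.ae_ne volume (0 : ℝ)] with s hs
    exact fiber_integral k n hk c hcn μ s hs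
  rw [lintegral_congr_ae h2, lintegral_mul_const _ (gdens_measurable _).ennreal_ofReal,
    gdens_lintegral, hyper_integral k hk c] at h1
  have h3 : ∫⁻ p in probSimplex k, ENNReal.ofReal (multProb k p c) ∂(surfMeasure k)
      = ENNReal.ofReal (Nat.multinomial Finset.univ c : ℝ) *
        ∫⁻ p in probSimplex k, ENNReal.ofReal (∏ i, p i ^ c i) ∂(surfMeasure k) := by
    rw [← lintegral_const_mul _ (by fun_prop)]
    congr 1
    funext p
    rw [multProb, ENNReal.ofReal_mul (by positivity)]
  rw [h3, ENNReal.eq_div_iff (by simp [Nat.factorial_ne_zero]) ENNReal.ofReal_ne_top, mul_left_comm,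
    ← h1, smul_eq_mul, mul_left_comm, ← ENNReal.ofReal_mul (by positivity)]
  congr 2
  have := Nat.multinomial_spec Finset.univ c
  rw [hcn] at this
  rw [← this]
  push_cast
  ring

lemma expectedVolume_eq (k n : ℕ) (K : ℝ≥0∞) (hK : ∀ c ∈ discSimplex k n,
    ∫⁻ p in probSimplex k, ENNReal.ofReal (multProb k p c) ∂(surfMeasure k) = K)
    (C : (Fin k → ℕ) → Set (EuclideanSpace ℝ (Fin k)))
    (hC : ∀ c ∈ discSimplex k n, MeasurableSet (C c)) :
    expectedVolume k n C = K * (∫⁻ p, ∑ c ∈ discSimplex k n, (C c).indicator 1 p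
      ∂(surfMeasure k)) / surfMeasure k (probSimplex k) := by
  have hmp : ∀ c, Measurable fun p : EuclideanSpace ℝ (Fin k) =>
      ENNReal.ofReal (multProb k p c) := by
    intro c
    unfold multProb
    fun_prop
  unfold expectedVolume
  congr 1
  rw [lintegral_finsetSum _ (fun c _ => (hmp c).mul_const _),
    lintegral_finsetSum' _ (fun c hc => (measurable_one.indicator (hC c hc)).aemeasurable),
    Finset.mul_sum]
  refine Finset.sum_congr rfl fun c hc => ?_
  rw [lintegral_mul_const _ (hmp c), hK c hc, lintegral_indicator_one (hC c hc)]

lemma Pmass_total (k n : ℕ) (p : EuclideanSpace ℝ (Fin k)) (hp : p ∈ probSimplex k) :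
    Pmass k p (discSimplex k n) = 1 := by
  have h := Finset.sum_pow_eq_sum_piAntidiag Finset.univ (fun i => p i) n
  rw [hp.2, one_pow] at h
  rw [h]
  unfold Pmass multProb
  refine Finset.sum_congr ?_ fun _ _ => rfl
  ext c
  simp only [discSimplex, Finset.mem_filter, Fintype.mem_piFinset, Finset.mem_range,
    Finset.mem_piAntidiag, Finset.mem_univ, implies_true, and_true]
  constructor
  · exact fun h => h.2
  · intro h
    refine ⟨fun i => ?_, h⟩
    have := Finset.single_le_sum (f := c) (fun _ _ => Nat.zero_le _) (Finset.mem_univ i)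
    have h' : ∑ j, c j = n := h
    exact Nat.lt_succ_of_le (this.trans_eq h')

/-- Optimality under a uniform prior: if `p` is drawn uniformly from `Δ_k` and `p̂` is the
empirical distribution of `n` i.i.d. draws from `p`, the expected volume of the minimal-volume
region `C*` is at most that of any confidence region `C` at level `1-δ`. -/
theorem uniform_prior_optimality (k n : ℕ) (hk : 2 ≤ k) (hn : 1 ≤ n)
    (δ : ℝ) (hδ0 : 0 < δ) (hδ1 : δ < 1)
    -- the covering collections `S*(p)` defining the minimal-volume region `C*`
    (Sstar : EuclideanSpace ℝ (Fin k) → Finset (Fin k → ℕ))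
    (hSsub : ∀ p ∈ probSimplex k, Sstar p ⊆ discSimplex k n)
    (hSmass : ∀ p ∈ probSimplex k, 1 - δ ≤ Pmass k p (Sstar p))
    (hSmin : ∀ p ∈ probSimplex k, ∀ T ⊆ discSimplex k n,
      1 - δ ≤ Pmass k p T → (Sstar p).card ≤ T.card)
    (Cstar : (Fin k → ℕ) → Set (EuclideanSpace ℝ (Fin k)))
    (hCstar : ∀ c, Cstar c = {p : EuclideanSpace ℝ (Fin k) | p ∈ probSimplex k ∧ c ∈ Sstar p})
    -- an arbitrary confidence region `C` at level `1-δ`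
    (C : (Fin k → ℕ) → Set (EuclideanSpace ℝ (Fin k)))
    (hCsub : ∀ c ∈ discSimplex k n, C c ⊆ probSimplex k)
    (hCconf : ∀ p ∈ probSimplex k,
      Pmass k p ((discSimplex k n).filter fun c => p ∉ C c) ≤ δ)
    -- measurability of all the regions involved
    (hCstarMeas : ∀ c ∈ discSimplex k n, MeasurableSet (Cstar c))
    (hCmeas : ∀ c ∈ discSimplex k n, MeasurableSet (C c)) :
    expectedVolume k n Cstar ≤ expectedVolume k n C := by
  obtain ⟨K, hK⟩ := dirichlet k n hk
  rw [expectedVolume_eq k n K hK Cstar hCstarMeas, expectedVolume_eq k n K hK C hCmeas]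
  refine ENNReal.div_le_div_right (mul_le_mul_right (lintegral_mono fun p => ?_) K) _
  beta_reduce
  by_cases hp : p ∈ probSimplex k
  · have e : ∀ D : (Fin k → ℕ) → Set (EuclideanSpace ℝ (Fin k)),
        ∑ c ∈ discSimplex k n, (D c).indicator (1 : EuclideanSpace ℝ (Fin k) → ℝ≥0∞) p
          = (((discSimplex k n).filter fun c => p ∈ D c).card : ℝ≥0∞) := by
      intro D
      simp [Set.indicator, Finset.sum_boole]
    rw [e, e]
    have hS : ((discSimplex k n).filter fun c => p ∈ Cstar c) = Sstar p := by
      ext c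
      simp only [hCstar, Finset.mem_filter, Set.mem_setOf_eq]
      exact ⟨fun h => h.2.2, fun h => ⟨hSsub p hp h, hp, h⟩⟩
    rw [hS]
    have hle := hSmin p hp ((discSimplex k n).filter fun c => p ∈ C c)
      (Finset.filter_subset _ _) (by
        have h1 := Pmass_total k n p hp
        have h2 := hCconf p hp
        unfold Pmass at h1 h2 ⊢
        rw [← Finset.sum_filter_add_sum_filter_not _ (fun c => p ∈ C c)] at h1
        linarith)
    exact_mod_cast hle
  · have : ∑ c ∈ discSimplex k n,
        (Cstar c).indicator (1 : EuclideanSpace ℝ (Fin k) → ℝ≥0∞) p = 0 :=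
      Finset.sum_eq_zero fun c _ => by simp [hCstar, hp]
    rw [this]
    exact zero_le
end
end
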